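/- For all real p > 0, ν > 0, a > 0, b > 0, the function x ↦ x^{ν−1} exp(−b x^p − a x^{−p}) is integrable on (0,∞) and ∫₀^∞ x^{ν−1} exp(−b x^p − a x^{−p}) dx = (1/p) (a/b)^{ν/(2p)} ∫₀^∞ t^{ν/p − 1} exp(−√(ab)·(t + 1/t)) dt. -/

import Mathlib

open MeasureTheory Set Real

/-!
Substituting `t = √(b / a) * x ^ p` balances the two terms of the exponent:
`b * x ^ p + a * x ^ (-p) = √(a * b) * (t + 1 / t)`. For `p > 0` the factor
`exp (-a * x ^ (-p))` vanishes at `0` faster than any power of `x`, so the integral converges for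
every real `ν`; replacing `p` by `-p` only swaps `a` and `b`.
-/

section ChangeOfVariables

variable {E : Type*} [NormedAddCommGroup E] [NormedSpace ℝ E]

lemma integral_rpow_smul_comp_rpow_Ioi (f : ℝ → E) (s : ℝ) {p : ℝ} (hp : p ≠ 0) :
    ∫ x in Ioi (0 : ℝ), x ^ (s - 1) • f (x ^ p) =
      |p|⁻¹ • ∫ t in Ioi (0 : ℝ), t ^ (s / p - 1) • f t := by
  rw [← integral_comp_rpow_Ioi (fun t => t ^ (s / p - 1) • f t) hp, ← integral_smul]
  refine setIntegral_congr_fun measurableSet_Ioi fun x (hx : 0 < x) => ?_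
  have jacobian : x ^ (p - 1) * (x ^ p) ^ (s / p - 1) = x ^ (s - 1) := by
    rw [← rpow_mul hx.le, ← rpow_add hx]
    congr 1
    field_simp
    ring
  simp only [smul_smul]
  rw [← jacobian, mul_assoc, inv_mul_cancel_left₀ (abs_ne_zero.mpr hp)]

lemma integral_rpow_smul_comp_mul_left_Ioi (f : ℝ → E) (s : ℝ) {c : ℝ} (hc : 0 < c) :
    ∫ x in Ioi (0 : ℝ), x ^ (s - 1) • f (c * x) =
      c ^ (-s) • ∫ t in Ioi (0 : ℝ), t ^ (s - 1) • f t := by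
  have scaled := integral_comp_mul_left_Ioi' (fun t => t ^ (s - 1) • f t) 0 hc
  rw [mul_zero] at scaled
  rw [← scaled, ← integral_smul, ← integral_smul]
  refine setIntegral_congr_fun measurableSet_Ioi fun x (hx : 0 < x) => ?_
  have powers_cancel : c ^ (-s) * (c * c ^ (s - 1)) = 1 := by
    rw [rpow_sub_one hc.ne', mul_div_cancel₀ _ hc.ne', ← rpow_add hc, neg_add_cancel, rpow_zero]
  simp only [smul_smul, mul_rpow hc.le hx.le]
  rw [← mul_assoc c, ← mul_assoc, powers_cancel, one_mul]

end ChangeOfVariables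

lemma exp_neg_le_factorial_div_pow {y : ℝ} (hy : 0 < y) (n : ℕ) :
    exp (-y) ≤ n.factorial / y ^ n := by
  rw [exp_neg, ← inv_div]
  exact inv_anti₀ (by positivity) (pow_div_factorial_le_exp y hy.le n)

lemma exp_neg_mul_rpow_neg_le {a x : ℝ} (ha : 0 < a) (hx : 0 < x) (p : ℝ) (n : ℕ) :
    exp (-(a * x ^ (-p))) ≤ n.factorial / a ^ n * x ^ (p * n) :=
  calc exp (-(a * x ^ (-p))) ≤ n.factorial / (a * x ^ (-p)) ^ n :=
        exp_neg_le_factorial_div_pow (by positivity) n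
    _ = n.factorial / a ^ n * x ^ (p * n) := by
        rw [mul_pow, rpow_neg hx.le, inv_pow, rpow_mul_natCast hx.le]
        field_simp

lemma integrableOn_rpow_mul_exp_neg_mul_rpow_sub_mul_rpow_neg_of_pos {p a b : ℝ} (s : ℝ)
    (hp : 0 < p) (ha : 0 < a) (hb : 0 < b) :
    IntegrableOn (fun x : ℝ => x ^ s * exp (-b * x ^ p - a * x ^ (-p))) (Ioi 0) := by
  obtain ⟨n, hn⟩ : ∃ n : ℕ, (-1 - s) / p < n := exists_nat_gt _
  have exponent_gt : -1 < s + p * n := by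
    rw [div_lt_iff₀' hp] at hn
    linarith
  have dominating := (integrableOn_rpow_mul_exp_neg_mul_rpow exponent_gt hp hb).const_mul
    (n.factorial / a ^ n)
  refine dominating.mono' (Measurable.aestronglyMeasurable (by fun_prop)) ?_
  refine ae_restrict_of_forall_mem measurableSet_Ioi fun x (hx : 0 < x) => ?_
  rw [norm_of_nonneg (by positivity)]
  calc x ^ s * exp (-b * x ^ p - a * x ^ (-p))
      = x ^ s * exp (-b * x ^ p) * exp (-(a * x ^ (-p))) := by
        rw [sub_eq_add_neg, exp_add, mul_assoc]
    _ ≤ x ^ s * exp (-b * x ^ p) * (n.factorial / a ^ n * x ^ (p * n)) := by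
        gcongr
        exact exp_neg_mul_rpow_neg_le ha hx p n
    _ = n.factorial / a ^ n * (x ^ (s + p * n) * exp (-b * x ^ p)) := by
        rw [rpow_add hx]
        ring

lemma integrableOn_rpow_mul_exp_neg_mul_rpow_sub_mul_rpow_neg {p a b : ℝ} (s : ℝ)
    (hp : p ≠ 0) (ha : 0 < a) (hb : 0 < b) :
    IntegrableOn (fun x : ℝ => x ^ s * exp (-b * x ^ p - a * x ^ (-p))) (Ioi 0) := by
  rcases hp.lt_or_gt with p_neg | p_pos
  · have swapped :=
      integrableOn_rpow_mul_exp_neg_mul_rpow_sub_mul_rpow_neg_of_pos s (neg_pos.mpr p_neg) hb ha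
    simpa only [neg_neg, neg_mul, sub_eq_add_neg, add_comm] using swapped
  · exact integrableOn_rpow_mul_exp_neg_mul_rpow_sub_mul_rpow_neg_of_pos s p_pos ha hb

lemma sqrt_mul_mul_add_one_div {a b : ℝ} (ha : 0 < a) (hb : 0 < b) (y : ℝ) :
    √(a * b) * (√(b / a) * y + 1 / (√(b / a) * y)) = b * y + a * y⁻¹ := by
  have sqrt_a_ne : √a ≠ 0 := (sqrt_pos.mpr ha).ne'
  have sqrt_b_ne : √b ≠ 0 := (sqrt_pos.mpr hb).ne'
  have mul_eq : √(a * b) * √(b / a) = b := by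
    rw [sqrt_mul ha.le, sqrt_div hb.le, mul_comm √a, mul_assoc, mul_div_cancel₀ _ sqrt_a_ne,
      mul_self_sqrt hb.le]
  have div_eq : √(a * b) * (√(b / a))⁻¹ = a := by
    rw [sqrt_mul ha.le, sqrt_div hb.le, inv_div, mul_assoc, mul_div_cancel₀ _ sqrt_b_ne,
      mul_self_sqrt ha.le]
  rw [one_div, mul_inv, mul_add, ← mul_assoc, ← mul_assoc, mul_eq, div_eq]

lemma sqrt_div_rpow_neg {a b : ℝ} (ha : 0 ≤ a) (hb : 0 ≤ b) (r : ℝ) :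
    √(b / a) ^ (-r) = (a / b) ^ (r / 2) := by
  rw [sqrt_eq_rpow, ← rpow_mul (by positivity), ← inv_div, inv_rpow (by positivity),
    ← rpow_neg (by positivity)]
  congr 1
  ring

theorem stmt19_general (p ν a b : ℝ) (hp : p ≠ 0) (ha : 0 < a) (hb : 0 < b) :
    IntegrableOn (fun x : ℝ => x ^ (ν - 1) * exp (-b * x ^ p - a * x ^ (-p))) (Ioi 0) ∧
    ∫ x in Ioi (0 : ℝ), x ^ (ν - 1) * exp (-b * x ^ p - a * x ^ (-p)) =
      (1 / |p|) * (a / b) ^ (ν / (2 * p)) *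
        ∫ t in Ioi (0 : ℝ), t ^ (ν / p - 1) * exp (-√(a * b) * (t + 1 / t)) := by
  refine ⟨integrableOn_rpow_mul_exp_neg_mul_rpow_sub_mul_rpow_neg _ hp ha hb, ?_⟩
  set c := √(b / a) with hc
  let g : ℝ → ℝ := fun t => exp (-√(a * b) * (t + 1 / t))
  have integrand_eq : ∀ x ∈ Ioi (0 : ℝ),
      x ^ (ν - 1) * exp (-b * x ^ p - a * x ^ (-p)) = x ^ (ν - 1) • g (c * x ^ p) := by
    intro x (hx : 0 < x)
    simp only [g, hc, neg_mul, sqrt_mul_mul_add_one_div ha hb, rpow_neg hx.le, neg_add',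
      smul_eq_mul]
  calc ∫ x in Ioi (0 : ℝ), x ^ (ν - 1) * exp (-b * x ^ p - a * x ^ (-p))
      = ∫ x in Ioi (0 : ℝ), x ^ (ν - 1) • g (c * x ^ p) :=
        setIntegral_congr_fun measurableSet_Ioi integrand_eq
    _ = |p|⁻¹ • ∫ y in Ioi (0 : ℝ), y ^ (ν / p - 1) • g (c * y) :=
        integral_rpow_smul_comp_rpow_Ioi (fun y => g (c * y)) ν hp
    _ = |p|⁻¹ • c ^ (-(ν / p)) • ∫ t in Ioi (0 : ℝ), t ^ (ν / p - 1) • g t := by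
        rw [integral_rpow_smul_comp_mul_left_Ioi g _ (sqrt_pos.mpr (div_pos hb ha))]
    _ = (1 / |p|) * (a / b) ^ (ν / (2 * p)) * ∫ t in Ioi (0 : ℝ), t ^ (ν / p - 1) * g t := by
        rw [sqrt_div_rpow_neg ha.le hb.le, div_div, mul_comm p, one_div, mul_assoc]
        simp only [smul_eq_mul]

/-- Bessel-free form of Gradshteyn–Ryzhik formula 3.478:
`∫₀^∞ x^{ν−1} exp(−b x^p − a x^{−p}) dx
  = (1/p)(a/b)^{ν/(2p)} ∫₀^∞ t^{ν/p−1} exp(−√(ab)(t + 1/t)) dt`. -/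
theorem stmt19 (p ν a b : ℝ) (hp : 0 < p) (hν : 0 < ν) (ha : 0 < a) (hb : 0 < b) :
    IntegrableOn (fun x : ℝ => x ^ (ν - 1) * Real.exp (-b * x ^ p - a * x ^ (-p)))
      (Set.Ioi 0) ∧
    ∫ x in Set.Ioi (0 : ℝ), x ^ (ν - 1) * Real.exp (-b * x ^ p - a * x ^ (-p)) =
      (1 / p) * (a / b) ^ (ν / (2 * p)) *
        ∫ t in Set.Ioi (0 : ℝ),
          t ^ (ν / p - 1) * Real.exp (-Real.sqrt (a * b) * (t + 1 / t)) := by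
  simpa only [abs_of_pos hp] using stmt19_general p ν a b hp.ne' ha hb
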